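/- The cubic Veronese surface V_{2,3} ⊆ ℙ⁹ is (1,4)-defective with defect 1: the variety of lines of ℙ⁹ lying in the span of 5 points of V_{2,3} has dimension strictly less than its expected dimension min{5·2 + 2·3, 2·8} = 16; equivalently, two general plane cubics cannot be simultaneously written as linear combinations of the same 5 cubes of linear forms. -/

import Mathlib

noncomputable section

/-- Projective space over ℂ with homogeneous coordinates indexed by `ι`. -/
abbrev Pj (ι : Type) := Projectivization ℂ (ι → ℂ)

/-- A polynomial `f` vanishes at a point of projective space if it vanishes at
every vector representative of the point. -/
def pvanishes {ι : Type} (f : MvPolynomial ι ℂ) (x : Pj ι) : Prop :=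
  ∀ (w : ι → ℂ) (hw : w ≠ 0), Projectivization.mk ℂ w hw = x → MvPolynomial.eval w f = 0

/-- The Zariski topology on projective space: generated by the complements of
zero sets of polynomials. -/
instance pjTop (ι : Type) : TopologicalSpace (Pj ι) :=
  TopologicalSpace.generateFrom {U | ∃ f : MvPolynomial ι ℂ, U = {x | ¬ pvanishes f x}}

/-- Dimension of a subset of projective space: the topological Krull dimension
in the (subspace) Zariski topology. -/
def pdim {ι : Type} (S : Set (Pj ι)) : WithBot ℕ∞ := topologicalKrullDim S

/-- A subset of projective space is nondegenerate if its points span the whole space. -/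
def Nondeg {ι : Type} (V : Set (Pj ι)) : Prop :=
  ⨆ x ∈ V, Projectivization.submodule x = ⊤

/-- The h-secant variety `Sec_h(V)`: the Zariski closure of the set of points lying
in the span of h+1 independent points of V. -/
def secant {ι : Type} (h : ℕ) (V : Set (Pj ι)) : Set (Pj ι) :=
  closure {x | ∃ p : Fin (h + 1) → Pj ι, (∀ j, p j ∈ V) ∧
    LinearIndependent ℂ (fun j => (p j).rep) ∧
    Projectivization.submodule x ≤ Submodule.span ℂ (Set.range fun j => (p j).rep)}


/-- The Grassmannian of k-planes of the projective space ℙ(ℂ^ι), i.e. of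
(k+1)-dimensional linear subspaces of ℂ^ι. -/
def Gr (ι : Type) (k : ℕ) := {W : Submodule ℂ (ι → ℂ) // Module.finrank ℂ W = k + 1}

/-- The Zariski topology on affine space ℂ^ι. -/
def affTop (ι : Type) : TopologicalSpace (ι → ℂ) :=
  TopologicalSpace.generateFrom {U | ∃ f : MvPolynomial ι ℂ, U = {x | MvPolynomial.eval x f ≠ 0}}

/-- The Stiefel-type parameter space of (k+1) linearly independent vectors in ℂ^ι,
recorded as a single matrix-like function. -/
def Stiefel (ι : Type) (k : ℕ) : Type :=
  {g : Fin (k + 1) × ι → ℂ // LinearIndependent ℂ (fun i => fun j => g (i, j))}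

def stiefelTop (ι : Type) (k : ℕ) : TopologicalSpace (Stiefel ι k) :=
  TopologicalSpace.induced Subtype.val (affTop _)

def stiefelToGr (ι : Type) (k : ℕ) (g : Stiefel ι k) : Gr ι k :=
  ⟨Submodule.span ℂ (Set.range fun i => fun j => g.1 (i, j)), by
    rw [finrank_span_eq_card g.2]; simp⟩

/-- The Zariski topology on the Grassmannian: the quotient topology from the
Stiefel parametrization. -/
instance grTop (ι : Type) (k : ℕ) : TopologicalSpace (Gr ι k) :=
  TopologicalSpace.coinduced (stiefelToGr ι k) (stiefelTop ι k)

/-- Dimension of a subset of the Grassmannian: topological Krull dimension. -/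
def grdim {ι : Type} {k : ℕ} (S : Set (Gr ι k)) : WithBot ℕ∞ := topologicalKrullDim S

/-- The (k,h)-Grassmann secant variety of V: the closure in the Grassmannian of the
set of k-planes lying in the span of h+1 independent points of V. -/
def grassSecant (ι : Type) (k h : ℕ) (V : Set (Pj ι)) : Set (Gr ι k) :=
  closure {W | ∃ p : Fin (h + 1) → Pj ι, (∀ j, p j ∈ V) ∧
    LinearIndependent ℂ (fun j => (p j).rep) ∧
    W.1 ≤ Submodule.span ℂ (Set.range fun j => (p j).rep)}

/-- Monomials of degree d in three variables: the coordinate index set of the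
target of the d-th Veronese embedding of ℙ². -/
def Mon (d : ℕ) : Type := {m : Fin 3 → ℕ // ∑ i, m i = d}

/-- The d-th Veronese embedding of ℙ². -/
def veronese (d : ℕ) (x : Pj (Fin 3)) : Pj (Mon d) :=
  Projectivization.mk ℂ (fun m => ∏ i, x.rep i ^ m.1 i) (by
    obtain ⟨i, hi⟩ := Function.ne_iff.mp (Projectivization.rep_nonzero x)
    simp only [Pi.zero_apply] at hi
    intro h
    have := congrFun h ⟨fun j => if j = i then d else 0, by simp⟩
    simp only [Pi.zero_apply] at this
    refine Finset.prod_ne_zero_iff.mpr (fun j _ => ?_) this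
    by_cases hj : j = i
    · subst hj; simpa using pow_ne_zero d hi
    · simp [hj])

/-- The Veronese surface V_{2,d}. -/
def veroneseVariety (d : ℕ) : Set (Pj (Mon d)) := Set.range (veronese d)

/-!
The polar conics of the cube of a linear form are multiples of its square. So if a pencil of cubics
lies in the span of five cubes, its six polar conics lie in the span of five squares and are
linearly dependent. Hence the `6 × 6` determinant of the polars vanishes on the secant variety. It
does not vanish at the Hesse pencil, so the secant variety is a proper closed subset of the
irreducible `16`-dimensional Grassmannian of lines of `ℙ⁹`, and its dimension is at most `15`.

Conversely, in Terracini's manner, parametrize the pencils by five points of the plane and the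
coefficients of two combinations of their cubes. The annihilator of the image of the differential
consists of pairs of cubics through the five points satisfying a singularity condition at each of
them. At a suitable base pencil only one such pair survives up to scalars, so by the open mapping
theorem `15` of the `16` affine coordinates of a chart can be prescribed freely nearby. No
nonzero polynomial in these `15` coordinates vanishes on the secant variety, whose dimension is
therefore at least `15`.
-/

open MvPolynomial
open scoped Topology

section KrullDimension

theorem ringKrullDim_le_of_isIntegral (R S : Type*) [CommRing R] [CommRing S] [Algebra R S]
    [Algebra.IsIntegral R S] [FaithfulSMul R S] : ringKrullDim R ≤ ringKrullDim S := by
  refine iSup_le fun l => ?_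
  obtain ⟨P, hP, hlies⟩ := Ideal.nonempty_primesOver (S := S) (RelSeries.head l).asIdeal
  obtain ⟨L, hL, -⟩ := Ideal.exists_ltSeries_of_hasGoingUp l P
  exact hL ▸ Order.LTSeries.length_le_krullDim L

theorem trdeg_le_ringKrullDim (k A : Type*) [Field k] [CommRing A] [IsDomain A] [Algebra k A]
    [Algebra.FiniteType k A] : ((Algebra.trdeg k A).toENat : WithBot ℕ∞) ≤ ringKrullDim A := by
  obtain ⟨s, g, hinj, hint⟩ := exists_integral_inj_algHom_of_fg k A
  algebraize [g.toRingHom]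
  have : FaithfulSMul (MvPolynomial (Fin s) k) A :=
    (faithfulSMul_iff_algebraMap_injective _ _).mpr hinj
  have htrdeg := congrArg Cardinal.toENat (lift_trdeg_add_eq k (MvPolynomial (Fin s) k) A)
  simp only [MvPolynomial.trdeg_of_isDomain, trdeg_eq_zero, Cardinal.mk_fin,
    Cardinal.lift_natCast, Cardinal.lift_zero, add_zero, map_natCast, Cardinal.toENat_lift]
    at htrdeg
  calc ((Algebra.trdeg k A).toENat : WithBot ℕ∞)
    _ = ringKrullDim (MvPolynomial (Fin s) k) := by
      rw [← htrdeg, MvPolynomial.ringKrullDim_of_isNoetherianRing, ringKrullDim_eq_zero_of_field]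
      simp
    _ ≤ ringKrullDim A := ringKrullDim_le_of_isIntegral _ _

theorem card_le_ringKrullDim_of_injective {k σ A : Type*} [Field k] [CommRing A]
    [Algebra k A] [Algebra.FiniteType k A] (φ : MvPolynomial σ k →ₐ[k] A)
    (hφ : Function.Injective φ) : (ENat.card σ : WithBot ℕ∞) ≤ ringKrullDim A := by
  obtain ⟨P, hP, hcomap⟩ : ∃ P : Ideal A, P.IsPrime ∧ P.comap φ.toRingHom = ⊥ :=
    Ideal.exists_comap_eq_of_mem_minimalPrimes_of_injective hφ ⊥
      (by simp [IsDomain.minimalPrimes_eq_singleton_bot])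
  have hinj : Function.Injective ((Ideal.Quotient.mkₐ k P).comp φ) := by
    refine (injective_iff_map_eq_zero _).mpr fun p hp => ?_
    rw [← Ideal.mem_bot, ← hcomap, Ideal.mem_comap]
    exact Ideal.Quotient.eq_zero_iff_mem.mp hp
  have htrdeg : ENat.card σ ≤ (Algebra.trdeg k (A ⧸ P)).toENat := by
    simpa [MvPolynomial.trdeg_of_isDomain, ENat.card] using
      Cardinal.toENat.monotone' (lift_trdeg_le_of_injective _ hinj)
  calc (ENat.card σ : WithBot ℕ∞) ≤ ((Algebra.trdeg k (A ⧸ P)).toENat : WithBot ℕ∞) := by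
        exact_mod_cast htrdeg
    _ ≤ ringKrullDim (A ⧸ P) := trdeg_le_ringKrullDim k _
    _ ≤ ringKrullDim A := ringKrullDim_quotient_le P

end KrullDimension

theorem isIrreducible_preimage_subtypeVal {X : Type*} [TopologicalSpace X] {s t : Set X}
    (hs : IsIrreducible s) (hst : s ⊆ t) : IsIrreducible (Subtype.val ⁻¹' s : Set t) := by
  have := Subtype.irreducibleSpace hs
  have himage := (IrreducibleSpace.isIrreducible_univ s).image (Set.inclusion hst)
    (continuous_inclusion hst).continuousOn
  rwa [Set.image_univ, Set.range_inclusion] at himage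

section AffineZariski

attribute [local instance] affTop

variable {ι : Type}

theorem isTopologicalBasis_affTop :
    TopologicalSpace.IsTopologicalBasis
      {U : Set (ι → ℂ) | ∃ f : MvPolynomial ι ℂ, U = {x | eval x f ≠ 0}} := by
  have huniv : Set.univ ∈ {U : Set (ι → ℂ) | ∃ f : MvPolynomial ι ℂ, U = {x | eval x f ≠ 0}} :=
    ⟨1, by simp⟩
  rw [← Set.insert_eq_of_mem huniv]
  refine TopologicalSpace.isTopologicalBasis_of_subbasis_of_inter rfl ?_
  rintro _ ⟨f, rfl⟩ _ ⟨g, rfl⟩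
  exact ⟨f * g, by ext; simp⟩

theorem isOpen_setOf_eval_ne_zero (f : MvPolynomial ι ℂ) : IsOpen {x | eval x f ≠ 0} :=
  isTopologicalBasis_affTop.isOpen ⟨f, rfl⟩

theorem isClosed_zeroLocus (I : Ideal (MvPolynomial ι ℂ)) : IsClosed (zeroLocus ℂ I) := by
  have : zeroLocus ℂ I = ⋂ f ∈ I, {x | eval x f ≠ 0}ᶜ := by
    ext x
    simp
  rw [this]
  exact isClosed_biInter fun f _ => (isOpen_setOf_eval_ne_zero f).isClosed_compl

theorem zeroLocus_vanishingIdeal_eq_closure (Z : Set (ι → ℂ)) :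
    zeroLocus ℂ (vanishingIdeal ℂ Z) = closure Z := by
  refine Set.Subset.antisymm (fun x hx => isTopologicalBasis_affTop.mem_closure_iff.mpr ?_)
    (closure_minimal (zeroLocus_vanishingIdeal_le Z) (isClosed_zeroLocus _))
  rintro _ ⟨f, rfl⟩ hf
  by_contra hempty
  refine hf (hx f fun z hz => ?_)
  by_contra hfz
  exact hempty ⟨z, hfz, hz⟩

theorem isIrreducible_zeroLocus [Finite ι] (P : Ideal (MvPolynomial ι ℂ)) [hP : P.IsPrime] :
    IsIrreducible (zeroLocus ℂ P) := by
  have hvanish : ∀ f ∉ P, ∃ x ∈ zeroLocus ℂ P, eval x f ≠ 0 := fun f hf => by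
    rw [← IsPrime.vanishingIdeal_zeroLocus (K := ℂ) P] at hf
    simp only [mem_vanishingIdeal_iff, not_forall, exists_prop] at hf
    exact hf
  constructor
  · obtain ⟨x, hx, -⟩ := hvanish 1 (P.ne_top_iff_one.mp hP.ne_top)
    exact ⟨x, hx⟩
  · rintro u v hu hv ⟨x, hxP, hxu⟩ ⟨y, hyP, hyv⟩
    obtain ⟨_, ⟨f, rfl⟩, hxf, hfu⟩ := isTopologicalBasis_affTop.exists_subset_of_mem_open hxu hu
    obtain ⟨_, ⟨g, rfl⟩, hyg, hgv⟩ := isTopologicalBasis_affTop.exists_subset_of_mem_open hyv hv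
    have hfg : f * g ∉ P :=
      hP.mul_notMem (fun hf => hxf (hxP f hf)) (fun hg => hyg (hyP g hg))
    obtain ⟨z, hzP, hz⟩ := hvanish _ hfg
    rw [map_mul] at hz
    exact ⟨z, hzP, hfu (left_ne_zero_of_mul hz), hgv (right_ne_zero_of_mul hz)⟩

theorem isInducing_pointToPoint :
    Topology.IsInducing (pointToPoint : (ι → ℂ) → PrimeSpectrum (MvPolynomial ι ℂ)) := by
  constructor
  rw [PrimeSpectrum.isTopologicalBasis_basic_opens.eq_generateFrom, induced_generateFrom_eq]
  refine congrArg TopologicalSpace.generateFrom ?_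
  rw [← Set.range_comp']
  ext U
  simp only [Set.mem_ofPred_eq, Set.mem_range]
  refine exists_congr fun f => ?_
  rw [eq_comm]
  have : pointToPoint ⁻¹' (PrimeSpectrum.basicOpen f : Set (PrimeSpectrum (MvPolynomial ι ℂ))) =
      {x : ι → ℂ | eval x f ≠ 0} := by
    ext x
    exact (mem_vanishingIdeal_singleton_iff x f).not
  rw [this]

theorem topologicalKrullDim_le_ringKrullDim_quotient (Z : Set (ι → ℂ)) :
    topologicalKrullDim Z ≤ ringKrullDim (MvPolynomial ι ℂ ⧸ vanishingIdeal ℂ Z) := by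
  let φ : Z → PrimeSpectrum.zeroLocus (vanishingIdeal ℂ Z : Set (MvPolynomial ι ℂ)) := fun x =>
    ⟨pointToPoint x.1, vanishingIdeal_anti_mono (Set.singleton_subset_iff.mpr x.2)⟩
  have hφ : Topology.IsInducing φ :=
    (isInducing_pointToPoint.comp Topology.IsInducing.subtypeVal).codRestrict fun x => (φ x).2
  refine hφ.topologicalKrullDim_le.trans_eq ?_
  rw [ringKrullDim_quotient,
    Order.krullDim_eq_of_orderIso (PrimeSpectrum.zeroLocusEquivIrreducibleCloseds _),
    Order.krullDim_orderDual]
  rfl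

theorem ringKrullDim_quotient_le_topologicalKrullDim [Finite ι] {Z : Set (ι → ℂ)}
    (hZ : IsClosed Z) :
    ringKrullDim (MvPolynomial ι ℂ ⧸ vanishingIdeal ℂ Z) ≤ topologicalKrullDim Z := by
  have hlocus (p : PrimeSpectrum.zeroLocus (vanishingIdeal ℂ Z : Set (MvPolynomial ι ℂ))) :
      zeroLocus ℂ p.1.asIdeal ⊆ Z := by
    have := zeroLocus_anti_mono (K := ℂ) p.2
    rwa [zeroLocus_vanishingIdeal_eq_closure, hZ.closure_eq] at this
  rw [ringKrullDim_quotient, ← Order.krullDim_orderDual]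
  refine Order.krullDim_le_of_strictMono
    (fun p => ⟨Subtype.val ⁻¹' zeroLocus ℂ p.ofDual.1.asIdeal,
      isIrreducible_preimage_subtypeVal (isIrreducible_zeroLocus _) (hlocus p.ofDual),
      (isClosed_zeroLocus _).preimage continuous_subtype_val⟩)
    (Monotone.strictMono_of_injective (fun p q hpq => ?_) fun p q hpq => ?_)
  · have hle : p.ofDual.1.asIdeal ≥ q.ofDual.1.asIdeal := hpq
    exact Set.preimage_mono (f := (Subtype.val : Z → ι → ℂ)) (zeroLocus_anti_mono hle)
  · have heq : zeroLocus ℂ p.ofDual.1.asIdeal = zeroLocus ℂ q.ofDual.1.asIdeal := by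
      have := congrArg TopologicalSpace.IrreducibleCloseds.carrier hpq
      rwa [Subtype.preimage_val_eq_preimage_val_iff, Set.inter_eq_right.mpr (hlocus _),
        Set.inter_eq_right.mpr (hlocus _)] at this
    refine OrderDual.ofDual_inj.mp (Subtype.ext (PrimeSpectrum.ext ?_))
    rw [← IsPrime.vanishingIdeal_zeroLocus (K := ℂ) p.ofDual.1.asIdeal, heq,
      IsPrime.vanishingIdeal_zeroLocus]

theorem topologicalKrullDim_add_one_le_of_eval_eq_zero [Finite ι] {Z : Set (ι → ℂ)}
    {f : MvPolynomial ι ℂ} (hf : f ≠ 0) (hZ : ∀ x ∈ Z, eval x f = 0) :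
    topologicalKrullDim Z + 1 ≤ Nat.card ι := by
  have hsucc : ringKrullDim (MvPolynomial ι ℂ ⧸ vanishingIdeal ℂ Z) + 1 ≤
      ringKrullDim (MvPolynomial ι ℂ) :=
    ringKrullDim_succ_le_of_surjective _ Ideal.Quotient.mk_surjective
      (mem_nonZeroDivisors_of_ne_zero hf)
      (Ideal.Quotient.eq_zero_iff_mem.mpr (mem_vanishingIdeal_iff.mpr hZ))
  calc topologicalKrullDim Z + 1
    _ ≤ ringKrullDim (MvPolynomial ι ℂ ⧸ vanishingIdeal ℂ Z) + 1 := by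
      gcongr
      exact topologicalKrullDim_le_ringKrullDim_quotient Z
    _ ≤ ringKrullDim (MvPolynomial ι ℂ) := hsucc
    _ = Nat.card ι := by
      rw [ringKrullDim_of_isNoetherianRing, ringKrullDim_eq_zero_of_field, zero_add]

theorem card_le_topologicalKrullDim_of_vanishingIdeal_image_comp_eq_bot {σ : Type} [Finite ι]
    {Z : Set (ι → ℂ)} (hZ : IsClosed Z) (e : σ → ι)
    (hdense : vanishingIdeal ℂ ((· ∘ e) '' Z) = ⊥) :
    (ENat.card σ : WithBot ℕ∞) ≤ topologicalKrullDim Z := by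
  refine le_trans ?_ (ringKrullDim_quotient_le_topologicalKrullDim hZ)
  refine card_le_ringKrullDim_of_injective
    ((Ideal.Quotient.mkₐ ℂ (vanishingIdeal ℂ Z)).comp (rename e)) ?_
  refine (injective_iff_map_eq_zero _).mpr fun p hp => ?_
  rw [← Ideal.mem_bot, ← hdense, mem_vanishingIdeal_iff, Set.forall_mem_image]
  intro x hx
  rw [← aeval_rename]
  exact Ideal.Quotient.eq_zero_iff_mem.mp hp x hx

end AffineZariski

theorem topologicalKrullDim_le_of_isOpenEmbedding_cover {X κ : Type*} {Y : κ → Type*}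
    [TopologicalSpace X] [∀ i, TopologicalSpace (Y i)] {f : ∀ i, Y i → X}
    (hf : ∀ i, Topology.IsOpenEmbedding (f i)) (hcover : ∀ x, ∃ i, x ∈ Set.range (f i))
    {n : WithBot ℕ∞} (hn : ∀ i, topologicalKrullDim (Y i) ≤ n) : topologicalKrullDim X ≤ n := by
  rw [topologicalKrullDim, Order.krullDim_eq_iSup_coheight]
  refine iSup_le fun V => ?_
  obtain ⟨x, hxV⟩ := V.isIrreducible.nonempty
  obtain ⟨i, y, rfl⟩ := hcover x
  obtain ⟨Z, hZ⟩ := (TopologicalSpace.IrreducibleCloseds.orderIsoOfIsOpenEmbedding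
    (f i) (hf i)).surjective ⟨V, y, hxV⟩
  have hmap : Z.map (f i) (hf i).continuous = V := congrArg Subtype.val hZ
  rw [← hmap, (hf i).coheight_map]
  exact (Order.coheight_le_krullDim Z).trans (hn i)

theorem eval_bind₁ {R σ τ : Type*} [CommSemiring R] (x : τ → R) (p : σ → MvPolynomial τ R)
    (f : MvPolynomial σ R) : eval x (bind₁ p f) = eval (fun i => eval x (p i)) f :=
  eval₂Hom_bind₁ _ _ _ _

section RationalMaps

attribute [local instance] affTop

variable {ι κ : Type}

theorem continuous_affTop_iff {X : Type*} [TopologicalSpace X] {φ : X → κ → ℂ} :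
    Continuous φ ↔ ∀ f : MvPolynomial κ ℂ, IsOpen {x | eval (φ x) f ≠ 0} := by
  rw [isTopologicalBasis_affTop.continuous_iff]
  exact ⟨fun h f => h _ ⟨f, rfl⟩, by rintro h _ ⟨f, rfl⟩; exact h f⟩

theorem continuous_eval (p : κ → MvPolynomial ι ℂ) :
    Continuous fun (x : ι → ℂ) k => eval x (p k) := by
  simp_rw [continuous_affTop_iff, ← eval_bind₁]
  exact fun f => isOpen_setOf_eval_ne_zero _

theorem exists_eval_eq_pow_mul_eval_div (n : κ → MvPolynomial ι ℂ) (d : MvPolynomial ι ℂ)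
    (f : MvPolynomial κ ℂ) : ∃ (N : ℕ) (r : MvPolynomial ι ℂ), ∀ x, eval x d ≠ 0 →
      eval x r = eval x d ^ N * eval (fun k => eval x (n k) / eval x d) f := by
  induction f using MvPolynomial.induction_on with
  | C a => exact ⟨0, C a, fun x _ => by simp⟩
  | add p q hp hq =>
    obtain ⟨M, r, hr⟩ := hp
    obtain ⟨N, s, hs⟩ := hq
    refine ⟨M + N, d ^ N * r + d ^ M * s, fun x hx => ?_⟩
    simp only [map_add, map_mul, map_pow, hr x hx, hs x hx]
    ring
  | mul_X p k hp =>
    obtain ⟨N, r, hr⟩ := hp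
    refine ⟨N + 1, r * n k, fun x hx => ?_⟩
    simp only [map_mul, hr x hx, eval_X]
    field_simp
    ring

theorem continuousOn_eval_div (n : κ → MvPolynomial ι ℂ) (d : MvPolynomial ι ℂ) :
    ContinuousOn (fun x k => eval x (n k) / eval x d) {x : ι → ℂ | eval x d ≠ 0} := by
  rw [continuousOn_iff_continuous_domRestrict, continuous_affTop_iff]
  intro f
  obtain ⟨N, r, hr⟩ := exists_eval_eq_pow_mul_eval_div n d f
  have hopen : IsOpen {x : {x : ι → ℂ | eval x d ≠ 0} | eval x.1 r ≠ 0} :=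
    (isOpen_setOf_eval_ne_zero r).preimage continuous_subtype_val
  convert hopen using 1
  ext ⟨x, hx⟩
  have hd : eval x d ≠ 0 := hx
  simp [hr x hd, hd]

end RationalMaps

section Frames

variable {K m n : Type*} [Field K] [Fintype m]

theorem exists_eq_mul_of_span_range_row_le {M N : Matrix m n K}
    (h : Submodule.span K (Set.range N.row) ≤ Submodule.span K (Set.range M.row)) :
    ∃ A : Matrix m m K, N = A * M := by
  rw [← range_vecMulLinear M] at h
  choose A hA using fun i => h (Submodule.subset_span (Set.mem_range_self i))
  exact ⟨A, funext fun i => (hA i).symm⟩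

variable [DecidableEq m]

theorem exists_isUnit_submatrix_of_linearIndependent_row {M : Matrix m n K}
    (hM : LinearIndependent K M.row) : ∃ I : m ↪ n, IsUnit (M.submatrix id I) := by
  have hspan : Submodule.span K (Set.range M.col) = ⊤ := by
    by_contra hne
    obtain ⟨φ, hφ, hker⟩ := Submodule.exists_le_ker_of_lt_top _ (lt_top_iff_ne_top.mpr hne)
    have hzero : ∑ i, φ (Pi.single i 1) • M.row i = 0 := by
      ext j
      have hj : φ (M.col j) = 0 := hker (Submodule.subset_span ⟨j, rfl⟩)
      rw [pi_eq_sum_univ' (M.col j), map_sum] at hj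
      simpa [mul_comm] using hj
    refine hφ (LinearMap.pi_ext' fun i => LinearMap.ext_ring ?_)
    exact Fintype.linearIndependent_iff.mp hM _ hzero i
  obtain ⟨κ, a, ha, hspan', hli⟩ := exists_linearIndependent' K M.col
  let b : Module.Basis κ K (m → K) := .mk hli (by rw [hspan', hspan])
  let e : m ≃ κ := (Pi.basisFun K m).indexEquiv b
  exact ⟨⟨a ∘ e, ha.comp e.injective⟩,
    Matrix.linearIndependent_cols_iff_isUnit.mp (hli.comp e e.injective)⟩

theorem linearIndependent_row_of_isUnit_submatrix {M : Matrix m n K} {I : m → n}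
    (hI : IsUnit (M.submatrix id I)) : LinearIndependent K M.row :=
  (Matrix.linearIndependent_rows_iff_isUnit.mpr hI).of_comp (LinearMap.funLeft K K I)

theorem span_range_row_mul {A : Matrix m m K} (hA : IsUnit A) (M : Matrix m n K) :
    Submodule.span K (Set.range (A * M).row) = Submodule.span K (Set.range M.row) := by
  have hcomp : (A * M).vecMulLinear = M.vecMulLinear ∘ₗ A.vecMulLinear := by
    exact LinearMap.ext fun v => (Matrix.vecMul_vecMul v A M).symm
  rw [← range_vecMulLinear, ← range_vecMulLinear, hcomp, LinearMap.range_comp_of_range_eq_top]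
  exact LinearMap.range_eq_top.mpr (Matrix.vecMul_surjective_iff_isUnit.mpr hA)

end Frames

namespace Gr

attribute [local instance] affTop stiefelTop

variable {ι : Type} {k : ℕ} (I : Fin (k + 1) ↪ ι)

/-- The `(k + 1) × ι` matrix whose rows are the vectors of the frame `g`. -/
def frameMatrix (g : Fin (k + 1) × ι → ℂ) : Matrix (Fin (k + 1)) ι ℂ := .of (Function.curry g)

/-- The maximal minor of a frame on the columns `I`, a polynomial in the entries: the Plücker
coordinate whose nonvanishing defines a standard affine chart of the Grassmannian. -/
def pluecker : MvPolynomial (Fin (k + 1) × ι) ℂ :=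
  ((Matrix.mvPolynomialX (Fin (k + 1)) ι ℂ).submatrix id I).det

/-- Coordinates on the standard affine chart of the columns `I`: the entries outside these columns
of the frame which restricts to the identity matrix on them. -/
abbrev ChartIndex : Type := Fin (k + 1) × {m : ι // m ∉ Set.range I}

open Classical in
/-- The frame with given chart coordinates, as a polynomial map: the identity matrix on the
columns `I` and the coordinates elsewhere. -/
def chartFramePoly (t : Fin (k + 1) × ι) : MvPolynomial (ChartIndex I) ℂ :=
  if h : t.2 ∈ Set.range I then if I t.1 = t.2 then 1 else 0 else X (t.1, ⟨t.2, h⟩)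

/-- The frame with chart coordinates `x`. -/
def chartFrame (x : ChartIndex I → ℂ) (t : Fin (k + 1) × ι) : ℂ := eval x (chartFramePoly I t)

/-- The chart coordinates of the span of a frame, which by Cramer's rule have `pluecker I` as a
common denominator; they are meaningless where it vanishes. -/
def chartCoord (g : Fin (k + 1) × ι → ℂ) (t : ChartIndex I) : ℂ :=
  (((frameMatrix g).submatrix id I)⁻¹ * frameMatrix g) t.1 t.2

variable {I}

theorem frameMatrix_chartFrame_submatrix (x : ChartIndex I → ℂ) :
    (frameMatrix (chartFrame I x)).submatrix id I = 1 := by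
  ext a b
  simp [frameMatrix, Function.curry, chartFrame, chartFramePoly, Matrix.one_apply, apply_ite]

theorem chartFrame_of_notMem (x : ChartIndex I → ℂ) (t : ChartIndex I) :
    chartFrame I x (t.1, t.2) = x t := by
  simp [chartFrame, chartFramePoly, t.2.2]

theorem eval_pluecker (g : Fin (k + 1) × ι → ℂ) :
    eval g (pluecker I) = ((frameMatrix g).submatrix id I).det := by
  rw [pluecker, RingHom.map_det]
  congr 1
  ext
  simp [frameMatrix, Function.curry]

theorem eval_pluecker_ne_zero_iff {g : Fin (k + 1) × ι → ℂ} :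
    eval g (pluecker I) ≠ 0 ↔ IsUnit ((frameMatrix g).submatrix id I) := by
  rw [eval_pluecker, Matrix.isUnit_iff_isUnit_det, isUnit_iff_ne_zero]

theorem chartCoord_chartFrame (x : ChartIndex I → ℂ) : chartCoord I (chartFrame I x) = x := by
  ext t
  rw [chartCoord, frameMatrix_chartFrame_submatrix, inv_one, Matrix.one_mul]
  exact chartFrame_of_notMem x t

theorem frameMatrix_chartFrame_chartCoord {g : Fin (k + 1) × ι → ℂ}
    (hg : eval g (pluecker I) ≠ 0) : frameMatrix (chartFrame I (chartCoord I g)) =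
      ((frameMatrix g).submatrix id I)⁻¹ * frameMatrix g := by
  have hdet : IsUnit ((frameMatrix g).submatrix id I).det :=
    (Matrix.isUnit_iff_isUnit_det _).mp (eval_pluecker_ne_zero_iff.mp hg)
  have hone : (((frameMatrix g).submatrix id I)⁻¹ * frameMatrix g).submatrix id I = 1 :=
    Matrix.nonsing_inv_mul _ hdet
  ext a m
  by_cases hm : m ∈ Set.range I
  · obtain ⟨b, rfl⟩ := hm
    exact congrFun₂ ((frameMatrix_chartFrame_submatrix _).trans hone.symm) a b
  · exact chartFrame_of_notMem (chartCoord I g) (a, ⟨m, hm⟩)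

theorem continuousOn_chartCoord :
    ContinuousOn (chartCoord I) {g | eval g (pluecker I) ≠ 0} := by
  let Y : Matrix (Fin (k + 1)) ι (MvPolynomial (Fin (k + 1) × ι) ℂ) := .mvPolynomialX _ _ ℂ
  have hmap (g : Fin (k + 1) × ι → ℂ) : Y.map (eval g) = frameMatrix g := by
    ext
    simp [Y, frameMatrix, Function.curry]
  convert continuousOn_eval_div
    (fun t : ChartIndex I => ((Y.submatrix id I).adjugate * Y) t.1 t.2) (pluecker I) using 1
  ext g t
  have hnum : eval g (((Y.submatrix id I).adjugate * Y) t.1 t.2) =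
      (((frameMatrix g).submatrix id I).adjugate * frameMatrix g) t.1 t.2 := by
    rw [← hmap, Matrix.submatrix_map, ← RingHom.mapMatrix_apply, ← RingHom.map_adjugate,
      RingHom.mapMatrix_apply, ← Matrix.map_mul, Matrix.map_apply]
  rw [hnum, eval_pluecker, chartCoord, Matrix.inv_def, Matrix.smul_mul, Matrix.smul_apply,
    Ring.inverse_eq_inv', smul_eq_mul, inv_mul_eq_div]

theorem chartCoord_eq_of_frameMatrix_eq_mul {g g' : Fin (k + 1) × ι → ℂ}
    {A : Matrix (Fin (k + 1)) (Fin (k + 1)) ℂ} (hA : frameMatrix g' = A * frameMatrix g)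
    (hg' : eval g' (pluecker I) ≠ 0) :
    eval g (pluecker I) ≠ 0 ∧ chartCoord I g' = chartCoord I g := by
  have hminor : (frameMatrix g').submatrix id I = A * (frameMatrix g).submatrix id I := by
    rw [hA]
    rfl
  have hdet : A.det ≠ 0 ∧ ((frameMatrix g).submatrix id I).det ≠ 0 := by
    rwa [eval_pluecker, hminor, Matrix.det_mul, mul_ne_zero_iff] at hg'
  refine ⟨(eval_pluecker g).trans_ne hdet.2, funext fun t => ?_⟩
  rw [chartCoord, hminor, hA, Matrix.mul_inv_rev, Matrix.mul_assoc, ← Matrix.mul_assoc A⁻¹,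
    Matrix.nonsing_inv_mul _ hdet.1.isUnit, Matrix.one_mul, chartCoord]

theorem chartCoord_eq_of_stiefelToGr_eq {g g' : Stiefel ι k}
    (h : stiefelToGr ι k g' = stiefelToGr ι k g) (hg' : eval g'.1 (pluecker I) ≠ 0) :
    eval g.1 (pluecker I) ≠ 0 ∧ chartCoord I g'.1 = chartCoord I g.1 :=
  have ⟨_, hA⟩ := exists_eq_mul_of_span_range_row_le (M := frameMatrix g.1) (N := frameMatrix g'.1)
    (congrArg Subtype.val h).le
  chartCoord_eq_of_frameMatrix_eq_mul hA hg'

theorem linearIndependent_of_eval_pluecker_ne_zero {g : Fin (k + 1) × ι → ℂ}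
    (hg : eval g (pluecker I) ≠ 0) : LinearIndependent ℂ fun a m => g (a, m) :=
  linearIndependent_row_of_isUnit_submatrix (M := frameMatrix g) (eval_pluecker_ne_zero_iff.mp hg)

theorem eval_pluecker_chartFrame (x : ChartIndex I → ℂ) :
    eval (chartFrame I x) (pluecker I) = 1 := by
  rw [eval_pluecker, frameMatrix_chartFrame_submatrix, Matrix.det_one]

variable (I) in
/-- The standard affine chart of the Grassmannian attached to the columns `I`, lifted to frames. -/
def chartStiefel (x : ChartIndex I → ℂ) : Stiefel ι k :=
  ⟨chartFrame I x, linearIndependent_of_eval_pluecker_ne_zero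
    ((eval_pluecker_chartFrame x).trans_ne one_ne_zero)⟩

variable (I) in
/-- The standard affine chart of the Grassmannian attached to the columns `I`. -/
def chart (x : ChartIndex I → ℂ) : Gr ι k := stiefelToGr ι k (chartStiefel I x)

theorem chart_chartCoord {g : Stiefel ι k} (hg : eval g.1 (pluecker I) ≠ 0) :
    chart I (chartCoord I g.1) = stiefelToGr ι k g := by
  have hunit : IsUnit ((frameMatrix g.1).submatrix id I)⁻¹ :=
    Matrix.isUnit_nonsing_inv_iff.mpr (eval_pluecker_ne_zero_iff.mp hg)
  have hspan := span_range_row_mul hunit (frameMatrix g.1)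
  rw [← frameMatrix_chartFrame_chartCoord hg] at hspan
  exact Subtype.ext hspan

theorem chart_injective : Function.Injective (chart I) := fun x y hxy => by
  have h := (chartCoord_eq_of_stiefelToGr_eq hxy
    ((eval_pluecker_chartFrame x).trans_ne one_ne_zero)).2
  rwa [chartStiefel, chartStiefel, chartCoord_chartFrame, chartCoord_chartFrame] at h

theorem stiefelToGr_preimage_chart_image (V : Set (ChartIndex I → ℂ)) :
    stiefelToGr ι k ⁻¹' (chart I '' V) =
      Subtype.val ⁻¹' ({g | eval g (pluecker I) ≠ 0} ∩ chartCoord I ⁻¹' V) := by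
  ext g
  constructor
  · rintro ⟨x, hx, hxg⟩
    obtain ⟨hg, hcoord⟩ := chartCoord_eq_of_stiefelToGr_eq hxg
      ((eval_pluecker_chartFrame x).trans_ne one_ne_zero)
    rw [chartStiefel, chartCoord_chartFrame] at hcoord
    exact ⟨hg, Set.mem_preimage.mpr (hcoord ▸ hx)⟩
  · rintro ⟨hg, hV⟩
    exact ⟨_, hV, chart_chartCoord hg⟩

theorem isOpenEmbedding_chart : Topology.IsOpenEmbedding (chart I) := by
  have hStiefel : Continuous (chartStiefel I) :=
    (continuous_eval (chartFramePoly I)).subtype_mk _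
  refine .of_continuous_injective_isOpenMap (continuous_coinduced_rng.comp hStiefel)
    chart_injective fun V hV => ?_
  rw [isOpen_coinduced, stiefelToGr_preimage_chart_image]
  exact (continuousOn_chartCoord.isOpen_inter_preimage (isOpen_setOf_eval_ne_zero _) hV).preimage
    continuous_subtype_val

theorem exists_stiefelToGr_eq (W : Gr ι k) : ∃ g, stiefelToGr ι k g = W := by
  have hpos : 0 < Module.finrank ℂ W.1 := by simp [W.2]
  have := Module.finite_of_finrank_pos hpos
  let b := Module.finBasisOfFinrankEq ℂ W.1 W.2
  refine ⟨⟨fun t => (b t.1 : ι → ℂ) t.2,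
    b.linearIndependent.map' W.1.subtype W.1.ker_subtype⟩, Subtype.ext ?_⟩
  have hspan := congrArg (Submodule.map W.1.subtype) b.span_eq
  rwa [Submodule.map_span, ← Set.range_comp, Submodule.map_subtype_top] at hspan

theorem exists_mem_range_chart (W : Gr ι k) : ∃ I, W ∈ Set.range (chart I) := by
  obtain ⟨g, rfl⟩ := exists_stiefelToGr_eq W
  obtain ⟨I, hI⟩ := exists_isUnit_submatrix_of_linearIndependent_row (M := frameMatrix g.1) g.2
  exact ⟨I, _, chart_chartCoord (eval_pluecker_ne_zero_iff.mpr hI)⟩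

theorem grdim_le_of_chart_preimage {S : Set (Gr ι k)} {n : WithBot ℕ∞}
    (h : ∀ I : Fin (k + 1) ↪ ι, topologicalKrullDim (chart I ⁻¹' S) ≤ n) : grdim S ≤ n := by
  refine topologicalKrullDim_le_of_isOpenEmbedding_cover
    (fun I => S.restrictPreimage_isOpenEmbedding isOpenEmbedding_chart) ?_ h
  rintro ⟨W, hW⟩
  obtain ⟨I, x, rfl⟩ := exists_mem_range_chart W
  exact ⟨I, ⟨x, hW⟩, rfl⟩

theorem topologicalKrullDim_chart_preimage_le (S : Set (Gr ι k)) :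
    topologicalKrullDim (chart I ⁻¹' S) ≤ grdim S :=
  (S.restrictPreimage_isInducing isOpenEmbedding_chart.isInducing).topologicalKrullDim_le

theorem chart_preimage_closure (S : Set (Gr ι k)) :
    chart I ⁻¹' closure S = closure (chart I ⁻¹' S) :=
  isOpenEmbedding_chart.isOpenMap.preimage_closure_eq_closure_preimage
    isOpenEmbedding_chart.continuous S

variable (I) in
theorem card_chartIndex [Finite ι] :
    Nat.card (ChartIndex I) = (k + 1) * (Nat.card ι - (k + 1)) := by
  have hcompl := Set.ncard_compl (Set.range I)
  rw [Set.ncard_range_of_injective I.injective, Nat.card_fin] at hcompl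
  rw [Nat.card_prod, Nat.card_fin, ← hcompl]
  rfl

end Gr

namespace Gr

attribute [local instance] affTop

variable {ι : Type} {k : ℕ}

theorem exists_stiefelToGr_eq_chart {I : Fin (k + 1) ↪ ι}
    {A : Matrix (Fin (k + 1)) (Fin (k + 1)) ℂ} (hA : IsUnit A) (x : ChartIndex I → ℂ) :
    ∃ g : Stiefel ι k, frameMatrix g.1 = A * frameMatrix (chartFrame I x) ∧
      stiefelToGr ι k g = chart I x := by
  have hminor : (A * frameMatrix (chartFrame I x)).submatrix id I = A :=
    (congrArg (A * ·) (frameMatrix_chartFrame_submatrix x)).trans (Matrix.mul_one A)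
  refine ⟨⟨fun t => (A * frameMatrix (chartFrame I x)) t.1 t.2, ?_⟩, rfl, Subtype.ext ?_⟩
  · exact linearIndependent_row_of_isUnit_submatrix (I := I) (hminor.symm ▸ hA)
  · exact span_range_row_mul hA (frameMatrix (chartFrame I x))

theorem exists_ne_zero_forall_mem_chart_preimage {S : Set (Gr ι k)}
    {f : MvPolynomial (Fin (k + 1) × ι) ℂ} (hf : f ≠ 0)
    (hS : ∀ g : Stiefel ι k, stiefelToGr ι k g ∈ S → eval g.1 f = 0) (I : Fin (k + 1) ↪ ι) :
    ∃ p : MvPolynomial (ChartIndex I) ℂ, p ≠ 0 ∧ ∀ x ∈ chart I ⁻¹' S, eval x p = 0 := by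
  have hpl : pluecker I ≠ 0 := fun h => by
    simpa [h] using eval_pluecker_chartFrame (I := I) 0
  obtain ⟨g, hg⟩ : ∃ g, eval g (f * pluecker I) ≠ 0 := by
    by_contra! h
    exact mul_ne_zero hf hpl (funext fun g => by simp [h g])
  rw [map_mul, mul_ne_zero_iff] at hg
  set A := (frameMatrix g).submatrix id I
  have hA : IsUnit A := eval_pluecker_ne_zero_iff.mp hg.2
  let p := bind₁ (fun t => ∑ b, C (A t.1 b) * chartFramePoly I (b, t.2)) f
  have hp (x : ChartIndex I → ℂ) :
      eval x p = eval (fun t => (A * frameMatrix (chartFrame I x)) t.1 t.2) f := by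
    simp [p, eval_bind₁, Matrix.mul_apply, frameMatrix, Function.curry, chartFrame]
  refine ⟨p, fun h => hg.1 ?_, fun x hx => ?_⟩
  · have := hp (chartCoord I g)
    rw [frameMatrix_chartFrame_chartCoord hg.2, Matrix.mul_nonsing_inv_cancel_left, h,
      map_zero] at this
    · exact this.symm
    · exact (Matrix.isUnit_iff_isUnit_det _).mp hA
  · obtain ⟨g', hg', hchart⟩ := exists_stiefelToGr_eq_chart hA x
    rw [hp, ← hg']
    exact hS g' (hchart ▸ hx)

theorem grdim_closure_le_of_eval_eq_zero [Finite ι] {S : Set (Gr ι k)}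
    {f : MvPolynomial (Fin (k + 1) × ι) ℂ} (hf : f ≠ 0)
    (hS : ∀ g : Stiefel ι k, stiefelToGr ι k g ∈ S → eval g.1 f = 0) {n : ℕ}
    (hn : (k + 1) * (Nat.card ι - (k + 1)) ≤ n + 1) : grdim (closure S) ≤ n := by
  refine grdim_le_of_chart_preimage fun I => ?_
  obtain ⟨p, hp, hzero⟩ := exists_ne_zero_forall_mem_chart_preimage hf hS I
  have hclosure : closure (chart I ⁻¹' S) ⊆ {x | eval x p ≠ 0}ᶜ :=
    closure_minimal (fun x hx => not_not.mpr (hzero x hx))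
      (isOpen_setOf_eval_ne_zero p).isClosed_compl
  have hdim := topologicalKrullDim_add_one_le_of_eval_eq_zero hp
    fun x hx => not_not.mp (hclosure hx)
  rw [← chart_preimage_closure, card_chartIndex] at hdim
  have hsucc : topologicalKrullDim (chart I ⁻¹' closure S) + 1 ≤ (n : WithBot ℕ∞) + 1 :=
    hdim.trans (by exact_mod_cast hn)
  exact ENat.WithBot.add_le_add_one_right_iff.mp hsucc

end Gr

section Polars

variable {d : ℕ}

instance instDecidableEqMon (d : ℕ) : DecidableEq (Mon d) :=
  inferInstanceAs (DecidableEq {m : Fin 3 → ℕ // ∑ i, m i = d})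

instance instFintypeMon (d : ℕ) : Fintype (Mon d) :=
  Fintype.subtype (Finset.Nat.antidiagonalTuple 3 d) fun _ => Finset.Nat.mem_antidiagonalTuple

/-- The vector of all monomials of degree `d` at `x`: the Veronese embedding on homogeneous
coordinates. -/
def veroneseVec (d : ℕ) (x : Fin 3 → ℂ) (m : Mon d) : ℂ := ∏ i, x i ^ m.1 i

/-- Multiplication of a monomial by the `j`-th variable. -/
def monMulX (j : Fin 3) (m : Mon d) : Mon (d + 1) :=
  ⟨m.1 + Pi.single j 1, by simp [Finset.sum_add_distrib, m.2]⟩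

/-- The `j`-th polar of a form. The coordinates on `Mon d → ℂ` are those of the target of the
Veronese embedding, so up to binomial factors this is the `j`-th partial derivative of the form
whose powers of linear forms are the points of the Veronese surface. -/
def polar (j : Fin 3) : (Mon (d + 1) → ℂ) →ₗ[ℂ] (Mon d → ℂ) := LinearMap.funLeft ℂ ℂ (monMulX j)

/-- The span of all polars of the forms in `W`. -/
def polarSpan (W : Submodule ℂ (Mon (d + 1) → ℂ)) : Submodule ℂ (Mon d → ℂ) :=
  ⨆ j, W.map (polar j)

theorem exists_rep_veronese_eq_smul (d : ℕ) (x : Pj (Fin 3)) :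
    ∃ a : ℂˣ, (veronese d x).rep = a • veroneseVec d x.rep :=
  (Projectivization.exists_smul_eq_mk_rep ℂ _ _).imp fun _ => Eq.symm

theorem polar_veroneseVec (j : Fin 3) (x : Fin 3 → ℂ) :
    polar j (veroneseVec (d + 1) x) = x j • veroneseVec d x := by
  ext m
  simp only [polar, LinearMap.funLeft_apply, veroneseVec, monMulX, Pi.add_apply, pow_add,
    Finset.prod_mul_distrib, Pi.single_apply, pow_ite, pow_one, pow_zero, Pi.smul_apply,
    smul_eq_mul]
  simp [mul_comm]

theorem finrank_polarSpan_le {κ : Type*} [Fintype κ] {W : Submodule ℂ (Mon (d + 1) → ℂ)}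
    {p : κ → Pj (Mon (d + 1))} (hp : ∀ i, p i ∈ veroneseVariety (d + 1))
    (hW : W ≤ Submodule.span ℂ (Set.range fun i => (p i).rep)) :
    Module.finrank ℂ (polarSpan W) ≤ Fintype.card κ := by
  choose x hx using hp
  have hle : polarSpan W ≤ Submodule.span ℂ (Set.range fun i => veroneseVec d (x i).rep) := by
    refine iSup_le fun j => (Submodule.map_mono hW).trans ?_
    rw [Submodule.map_span_le]
    rintro _ ⟨i, rfl⟩
    obtain ⟨a, ha⟩ := exists_rep_veronese_eq_smul (d + 1) (x i)
    rw [hx] at ha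
    simp only [ha, Units.smul_def, map_smul, polar_veroneseVec]
    exact Submodule.smul_mem _ _ (Submodule.smul_mem _ _ (Submodule.subset_span ⟨i, rfl⟩))
  exact (Submodule.finrank_mono hle).trans (finrank_range_le_card _)

/-- A maximal minor, on the columns `q`, of the matrix whose rows are the polars of the `k + 1`
forms of a frame. -/
def polarMinor {k : ℕ} (q : Fin (k + 1) × Fin 3 → Mon d) :
    MvPolynomial (Fin (k + 1) × Mon (d + 1)) ℂ :=
  (Matrix.of fun t s => X (t.1, monMulX t.2 (q s))).det

theorem eval_polarMinor {k : ℕ} (q : Fin (k + 1) × Fin 3 → Mon d)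
    (g : Fin (k + 1) × Mon (d + 1) → ℂ) :
    eval g (polarMinor q) =
      ((Matrix.of fun t => polar t.2 fun m => g (t.1, m)).submatrix id q).det := by
  rw [polarMinor, RingHom.map_det]
  congr 1
  ext
  simp [polar, LinearMap.funLeft_apply]

theorem eval_polarMinor_eq_zero_of_finrank_polarSpan_lt {k : ℕ}
    (q : Fin (k + 1) × Fin 3 → Mon d) {g : Fin (k + 1) × Mon (d + 1) → ℂ}
    (hg : Module.finrank ℂ (polarSpan (Submodule.span ℂ (Set.range fun a m => g (a, m)))) <
      (k + 1) * 3) : eval g (polarMinor q) = 0 := by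
  by_contra hne
  rw [eval_polarMinor, ← ne_eq, ← isUnit_iff_ne_zero, ← Matrix.isUnit_iff_isUnit_det] at hne
  have hspan : Submodule.span ℂ (Set.range fun t : Fin (k + 1) × Fin 3 =>
      polar t.2 fun m => g (t.1, m)) ≤
      polarSpan (Submodule.span ℂ (Set.range fun a m => g (a, m))) := by
    rw [Submodule.span_le]
    rintro _ ⟨t, rfl⟩
    exact Submodule.mem_iSup_of_mem t.2
      (Submodule.mem_map_of_mem (Submodule.subset_span ⟨t.1, rfl⟩))
  have hcard := finrank_span_eq_card (linearIndependent_row_of_isUnit_submatrix hne)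
  rw [Fintype.card_prod, Fintype.card_fin, Fintype.card_fin] at hcard
  exact hg.not_ge (hcard.ge.trans (Submodule.finrank_mono hspan))

/-- The quadratic monomials `x_j²` and `∏ x_l / x_j`, dual to the polars of the Hesse pencil. -/
def hesseMon (t : Fin 2 × Fin 3) : Mon 2 :=
  ⟨fun l => ![if l = t.2 then 2 else 0, if l = t.2 then 0 else 1] t.1, by
    revert t
    decide⟩

/-- The Hesse pencil, spanned by `x³ + y³ + z³` and `xyz` up to binomial factors. -/
def hessePencil (t : Fin 2 × Mon 3) : ℂ :=
  if t.2 ∈ Finset.univ.image (fun j => monMulX j (hesseMon (t.1, j))) then 1 else 0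

theorem polarMinor_hesseMon_ne_zero : polarMinor hesseMon ≠ 0 := fun h => by
  have hone : (Matrix.of fun t : Fin 2 × Fin 3 => polar t.2 fun m =>
      hessePencil (t.1, m)).submatrix id hesseMon = 1 := by
    ext t s
    have hiff : ∀ t s, monMulX t.2 (hesseMon s) ∈
        Finset.univ.image (fun j => monMulX j (hesseMon (t.1, j))) ↔ t = s := by decide
    simp only [Matrix.submatrix_apply, id, Matrix.of_apply, polar, LinearMap.funLeft_apply,
      hessePencil, hiff, Matrix.one_apply]
  have := eval_polarMinor hesseMon hessePencil
  rw [h, hone, Matrix.det_one, map_zero] at this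
  exact zero_ne_one this

end Polars

/-- The `k`-planes lying in the span of `h + 1` independent points of `V`, whose closure is the
Grassmann secant variety. -/
def secantPlanes (ι : Type) (k h : ℕ) (V : Set (Pj ι)) : Set (Gr ι k) :=
  {W | ∃ p : Fin (h + 1) → Pj ι, (∀ j, p j ∈ V) ∧
    LinearIndependent ℂ (fun j => (p j).rep) ∧
    W.1 ≤ Submodule.span ℂ (Set.range fun j => (p j).rep)}

theorem grdim_grassSecant_veronese_le :
    grdim (grassSecant (Mon 3) 1 4 (veroneseVariety 3)) ≤ (15 : ℕ) := by
  refine Gr.grdim_closure_le_of_eval_eq_zero polarMinor_hesseMon_ne_zero (fun g hg => ?_) ?_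
  · obtain ⟨p, hp, -, hle⟩ := hg
    refine eval_polarMinor_eq_zero_of_finrank_polarSpan_lt _
      (lt_of_le_of_lt (finrank_polarSpan_le hp hle) (by simp))
  · rw [Nat.card_eq_fintype_card]
    decide

theorem eq_zero_of_eventually_eval_eq_zero {𝕜 σ : Type*} [NontriviallyNormedField 𝕜] [Finite σ]
    {p : MvPolynomial σ 𝕜} {x₀ : σ → 𝕜} (hp : ∀ᶠ x in 𝓝 x₀, eval x p = 0) : p = 0 := by
  cases nonempty_fintype σ
  obtain ⟨ε, hε, hball⟩ := Metric.eventually_nhds_iff_ball.mp hp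
  refine MvPolynomial.funext_set (fun i => Metric.ball (x₀ i) ε)
    (fun i => infinite_of_mem_nhds _ (Metric.ball_mem_nhds _ hε)) fun x hx => ?_
  rw [← ball_pi _ hε] at hx
  rw [hball x hx, map_zero]

theorem eventually_exists_eqOn_of_hasStrictFDerivAt {𝕜 E κ : Type*} [NontriviallyNormedField 𝕜]
    [CompleteSpace 𝕜] [NormedAddCommGroup E] [NormedSpace 𝕜 E] [CompleteSpace E] [Finite κ]
    {f : E → κ → 𝕜} {f' : E →L[𝕜] (κ → 𝕜)} {a : E} (hf : HasStrictFDerivAt f f' a) {s : Set κ}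
    (hsurj : ∀ w, ∃ v, Set.EqOn (f' v) w s) {u : Set E} (hu : u ∈ 𝓝 a) :
    ∀ᶠ y in 𝓝 (f a), ∃ x ∈ u, Set.EqOn (f x) y s := by
  cases nonempty_fintype κ
  have := Fintype.ofFinite s
  let restrict : (κ → 𝕜) →L[𝕜] (s → 𝕜) := .pi fun t => .proj t.1
  have hrange : (restrict ∘L f').range = ⊤ := LinearMap.range_eq_top.mpr fun w => by
    obtain ⟨v, hv⟩ := hsurj (Function.extend Subtype.val w 0)
    exact ⟨v, funext fun t => (hv t.2).trans (Subtype.val_injective.extend_apply w 0 t)⟩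
  have hnhds := (restrict.hasStrictFDerivAt.comp a hf).map_nhds_eq_of_surj hrange
  have himage := Filter.image_mem_map (m := fun x => restrict (f x)) hu
  rw [hnhds] at himage
  filter_upwards [restrict.continuous.continuousAt himage]
  rintro y ⟨x, hx, hxy⟩
  exact ⟨x, hx, fun t ht => congrFun hxy ⟨t, ht⟩⟩

theorem vanishingIdeal_image_comp_val_eq_bot {ι : Type*} [Finite ι] {Z : Set (ι → ℂ)} {s : Set ι}
    {y₀ : ι → ℂ} (hZ : ∀ᶠ y in 𝓝 y₀, ∃ x ∈ Z, Set.EqOn x y s) :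
    vanishingIdeal ℂ ((· ∘ (Subtype.val : s → ι)) '' Z) = ⊥ := by
  refine eq_bot_iff.mpr fun p hp => ?_
  refine (map_eq_zero_iff (rename (R := ℂ) Subtype.val)
    (rename_injective _ Subtype.val_injective)).mp
    (eq_zero_of_eventually_eval_eq_zero (hZ.mono ?_))
  rintro y ⟨x, hx, hxy⟩
  have hpx := hp _ ⟨x, hx, rfl⟩
  rw [aeval_eq_eval] at hpx
  rw [eval_rename, ← hpx]
  exact congrArg (eval · p) (funext fun t => (hxy t.2).symm)

namespace Gr

variable {ι : Type} {k : ℕ} {I : Fin (k + 1) ↪ ι}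

theorem chartFrame_chartCoord_of_submatrix_eq_one {g : Fin (k + 1) × ι → ℂ}
    (hg : (frameMatrix g).submatrix id I = 1) : chartFrame I (chartCoord I g) = g := by
  have hpl : eval g (pluecker I) ≠ 0 := by
    rw [eval_pluecker, hg, Matrix.det_one]
    exact one_ne_zero
  have h := frameMatrix_chartFrame_chartCoord hpl
  rw [hg, inv_one, Matrix.one_mul] at h
  exact funext fun t => congrFun₂ h t.1 t.2

theorem chartFrame_of_mem {t : Fin (k + 1) × ι} (ht : t.2 ∈ Set.range I)
    (x y : ChartIndex I → ℂ) : chartFrame I x t = chartFrame I y t := by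
  have hpoly : ∃ a : ℂ, chartFramePoly I t = C a := by
    rw [chartFramePoly, dif_pos ht]
    split_ifs
    exacts [⟨1, C_1.symm⟩, ⟨0, C_0.symm⟩]
  obtain ⟨a, ha⟩ := hpoly
  rw [chartFrame, chartFrame, ha, eval_C, eval_C]

theorem exists_mem_chart_preimage_of_eqOn {S : Set (Gr ι k)} {T : Set (ChartIndex I)}
    {g : Fin (k + 1) × ι → ℂ} (hS : ∀ G : Stiefel ι k, G.1 = g → stiefelToGr ι k G ∈ S)
    {y : ChartIndex I → ℂ} (hy : Set.EqOn g (chartFrame I y) (Prod.map id Subtype.val '' T)ᶜ) :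
    ∃ x ∈ chart I ⁻¹' S, Set.EqOn x y Tᶜ := by
  refine ⟨fun t => g (t.1, t.2), hS _ (funext fun t => ?_), fun t ht => ?_⟩
  · by_cases htI : t.2 ∈ Set.range I
    · rw [hy, chartStiefel, chartFrame_of_mem htI]
      rintro ⟨u, -, rfl⟩
      exact u.2.2 htI
    · exact chartFrame_of_notMem _ (t.1, ⟨t.2, htI⟩)
  · refine (hy ?_).trans (chartFrame_of_notMem y t)
    have hinj : Function.Injective (Prod.map id Subtype.val : ChartIndex I → Fin (k + 1) × ι) :=
      Function.injective_id.prodMap Subtype.val_injective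
    rintro ⟨u, hu, hut⟩
    exact ht (hinj hut ▸ hu)

theorem continuous_chartFrame : Continuous (chartFrame I) :=
  continuous_pi fun t => MvPolynomial.continuous_eval (chartFramePoly I t)

theorem ncard_le_grdim_closure [Finite ι] {S : Set (Gr ι k)} {s : Set (ChartIndex I)}
    {y₀ : ChartIndex I → ℂ} (hS : ∀ᶠ y in 𝓝 y₀, ∃ x ∈ chart I ⁻¹' S, Set.EqOn x y s) :
    (s.ncard : WithBot ℕ∞) ≤ grdim (closure S) := by
  have hclosed : IsClosed[affTop _] (chart I ⁻¹' closure S) := by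
    let := affTop
    exact isClosed_closure.preimage isOpenEmbedding_chart.continuous
  have hdense := vanishingIdeal_image_comp_val_eq_bot <| hS.mono fun y ⟨x, hx, hxy⟩ =>
    ⟨x, Set.preimage_mono subset_closure hx, hxy⟩
  refine le_trans ?_ (topologicalKrullDim_chart_preimage_le (I := I) (closure S))
  refine le_of_eq_of_le ?_
    (card_le_topologicalKrullDim_of_vanishingIdeal_image_comp_eq_bot hclosed _ hdense)
  rw [ENat.card_coe_set_eq, ← Set.Finite.cast_ncard_eq (Set.toFinite _)]
  rfl

theorem ncard_compl_le_grdim_closure [Finite ι] {E : Type*} [NormedAddCommGroup E]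
    [NormedSpace ℂ E] [CompleteSpace E] {S : Set (Gr ι k)} {T : Set (ChartIndex I)}
    {Ψ : E → Fin (k + 1) × ι → ℂ} {Ψ' : E →L[ℂ] (Fin (k + 1) × ι → ℂ)} {θ₀ : E}
    (hΨ : HasStrictFDerivAt Ψ Ψ' θ₀) (hI : (frameMatrix (Ψ θ₀)).submatrix id I = 1)
    (hS : ∀ᶠ θ in 𝓝 θ₀, ∀ g : Stiefel ι k, g.1 = Ψ θ → stiefelToGr ι k g ∈ S)
    (hsurj : ∀ w, ∃ v, Set.EqOn (Ψ' v) w (Prod.map id Subtype.val '' T)ᶜ) :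
    (Tᶜ.ncard : WithBot ℕ∞) ≤ grdim (closure S) := by
  cases nonempty_fintype ι
  have hlift := eventually_exists_eqOn_of_hasStrictFDerivAt hΨ hsurj hS
  rw [← chartFrame_chartCoord_of_submatrix_eq_one hI] at hlift
  refine ncard_le_grdim_closure ((continuous_chartFrame.continuousAt.eventually hlift).mono ?_)
  rintro y ⟨θ, hθ, hθy⟩
  exact exists_mem_chart_preimage_of_eqOn hθ hθy

end Gr

theorem exists_eqOn_of_forall_dotProduct_eq_zero {𝕜 E κ : Type*} [Field 𝕜] [AddCommGroup E]
    [Module 𝕜 E] [Fintype κ] {L : E →ₗ[𝕜] (κ → 𝕜)} {s : Set κ}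
    (hL : ∀ a : κ → 𝕜, (∀ t ∉ s, a t = 0) → (∀ v, a ⬝ᵥ L v = 0) → a = 0) (w : κ → 𝕜) :
    ∃ v, Set.EqOn (L v) w s := by
  classical
  have htop : L.range ⊔ Submodule.pi s (fun _ => ⊥) = ⊤ := by
    by_contra hne
    obtain ⟨f, hf, hle⟩ := Submodule.exists_le_ker_of_lt_top _ (lt_top_iff_ne_top.mpr hne)
    obtain ⟨a, rfl⟩ := (dotProductEquiv 𝕜 κ).surjective f
    refine hf ((LinearEquiv.map_eq_zero_iff _).mpr (hL a (fun t ht => ?_) fun v => ?_))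
    · have hsingle : Pi.single t 1 ∈ Submodule.pi s fun _ : κ => (⊥ : Submodule 𝕜 𝕜) :=
        fun u hu => Pi.single_eq_of_ne (ne_of_mem_of_not_mem hu ht) 1
      rw [← dotProduct_single_one a t]
      exact hle (Submodule.mem_sup_right hsingle)
    · exact hle (Submodule.mem_sup_left ⟨v, rfl⟩)
  obtain ⟨_, ⟨v, rfl⟩, u, hu, huw⟩ := Submodule.mem_sup.mp (htop.ge (Submodule.mem_top (x := w)))
  refine ⟨v, fun t ht => ?_⟩
  rw [← huw, Pi.add_apply, (Submodule.mem_bot 𝕜).mp (hu t ht), add_zero]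

section Terracini

variable {d k h : ℕ}

theorem veroneseVec_smul (a : ℂ) (x : Fin 3 → ℂ) :
    veroneseVec d (a • x) = a ^ d • veroneseVec d x := by
  ext m
  simp only [veroneseVec, Pi.smul_apply, smul_eq_mul, mul_pow, Finset.prod_mul_distrib,
    Finset.prod_pow_eq_pow_sum, m.2]

theorem veroneseVec_zero (hd : d ≠ 0) : veroneseVec d 0 = 0 := by
  rw [← zero_smul ℂ 0, veroneseVec_smul, zero_pow hd, zero_smul]

theorem exists_rep_veronese_mk_eq_smul {x : Fin 3 → ℂ} (hx : x ≠ 0) :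
    ∃ a : ℂˣ, (veronese d (Projectivization.mk ℂ x hx)).rep = a • veroneseVec d x := by
  obtain ⟨a, ha⟩ := exists_rep_veronese_eq_smul d (Projectivization.mk ℂ x hx)
  obtain ⟨b, hb⟩ := Projectivization.exists_smul_eq_mk_rep ℂ x hx
  refine ⟨a * b ^ d, ?_⟩
  rw [ha, ← hb, Units.smul_def b, veroneseVec_smul, mul_smul, Units.smul_def (b ^ d),
    Units.val_pow_eq_pow_val]

/-- Parameters of a `k`-plane in an `h + 1`-secant space of a Veronese surface: the coefficients
of a frame in terms of the `h + 1` points, and homogeneous coordinates of these points on `ℙ²`. -/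
abbrev SecantParam (k h : ℕ) : Type :=
  (Fin (k + 1) → Fin (h + 1) → ℂ) × (Fin (h + 1) → Fin 3 → ℂ)

/-- The frame whose rows are the combinations of the points of the Veronese surface prescribed
by `θ`. -/
def secantFrame (d : ℕ) (θ : SecantParam k h) (t : Fin (k + 1) × Mon d) : ℂ :=
  ∑ j, θ.1 t.1 j * veroneseVec d (θ.2 j) t.2

theorem stiefelToGr_mem_secantPlanes (hd : d ≠ 0) {θ : SecantParam k h}
    (hθ : LinearIndependent ℂ fun j => veroneseVec d (θ.2 j)) {g : Stiefel (Mon d) k}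
    (hg : g.1 = secantFrame d θ) :
    stiefelToGr (Mon d) k g ∈ secantPlanes (Mon d) k h (veroneseVariety d) := by
  have hne (j : Fin (h + 1)) : θ.2 j ≠ 0 := fun hj =>
    hθ.ne_zero j ((congrArg _ hj).trans (veroneseVec_zero hd))
  choose a ha using fun j => exists_rep_veronese_mk_eq_smul (d := d) (hne j)
  have hspan (j : Fin (h + 1)) : veroneseVec d (θ.2 j) ∈ Submodule.span ℂ
      (Set.range fun j => (veronese d (Projectivization.mk ℂ (θ.2 j) (hne j))).rep) := by
    rw [← inv_smul_smul (a j) (veroneseVec d (θ.2 j)), ← ha]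
    exact Submodule.smul_of_tower_mem _ _ (Submodule.subset_span ⟨j, rfl⟩)
  refine ⟨fun j => veronese d (Projectivization.mk ℂ (θ.2 j) (hne j)), fun j => ⟨_, rfl⟩, ?_, ?_⟩
  · simp only [ha]
    exact hθ.units_smul a
  · refine Submodule.span_le.mpr ?_
    rintro _ ⟨i, rfl⟩
    have hrow : (fun m => g.1 (i, m)) = ∑ j, θ.1 i j • veroneseVec d (θ.2 j) := by
      ext m
      simp [hg, secantFrame]
    simp only [SetLike.mem_coe, hrow]
    exact Submodule.sum_mem _ fun j _ => Submodule.smul_mem _ _ (hspan j)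

theorem contDiff_veroneseVec : ContDiff ℂ 1 (veroneseVec d) := by
  unfold veroneseVec
  fun_prop

theorem contDiff_secantFrame : ContDiff ℂ 1 (secantFrame (k := k) (h := h) d) := by
  refine contDiff_pi.mpr fun t => ContDiff.sum fun j _ => ContDiff.mul (by fun_prop) ?_
  exact contDiff_pi.mp (contDiff_veroneseVec.comp (by fun_prop)) t.2

theorem eventually_linearIndependent_veroneseVec {x₀ : Fin (h + 1) → Fin 3 → ℂ}
    (hx₀ : LinearIndependent ℂ fun j => veroneseVec d (x₀ j)) :
    ∀ᶠ x in 𝓝 x₀, LinearIndependent ℂ fun j => veroneseVec d (x j) := by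
  have hcont : Continuous fun (x : Fin (h + 1) → Fin 3 → ℂ) j => veroneseVec d (x j) :=
    continuous_pi fun j => contDiff_veroneseVec.continuous.comp (continuous_apply j)
  exact hcont.continuousAt.eventually (isOpen_setOfPred_linearIndependent.mem_nhds hx₀)

theorem fderiv_secantFrame (θ v : SecantParam k h) (t : Fin (k + 1) × Mon d) :
    fderiv ℂ (secantFrame d) θ v t =
      ∑ j, (θ.1 t.1 j * fderiv ℂ (veroneseVec d) (θ.2 j) (v.2 j) t.2 +
      v.1 t.1 j * veroneseVec d (θ.2 j) t.2) := by
  let coef (j : Fin (h + 1)) : SecantParam k h →L[ℂ] ℂ := .proj j ∘L .proj t.1 ∘L .fst ℂ _ _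
  let point (j : Fin (h + 1)) : SecantParam k h →L[ℂ] (Fin 3 → ℂ) := .proj j ∘L .snd ℂ _ _
  have hpoint (j : Fin (h + 1)) :=
    (contDiff_veroneseVec (d := d)).differentiable one_ne_zero (point j θ)
  have hsum := HasFDerivAt.fun_sum fun j (_ : j ∈ Finset.univ) =>
    (coef j).hasFDerivAt.mul
      (hasFDerivAt_pi'.mp ((hpoint j).hasFDerivAt.comp θ (point j).hasFDerivAt) t.2)
  have hframe := hasFDerivAt_pi'.mp
    (contDiff_secantFrame.differentiable one_ne_zero θ).hasFDerivAt t
  have := congrArg (· v) (hframe.unique hsum)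
  simpa [mul_comm, coef, point] using this

theorem forall_dotProduct_fderiv_secantFrame_eq_zero {θ : SecantParam k h}
    {a : Fin (k + 1) × Mon d → ℂ} (ha : ∀ v, a ⬝ᵥ fderiv ℂ (secantFrame d) θ v = 0) :
    (∀ i j, (fun m => a (i, m)) ⬝ᵥ veroneseVec d (θ.2 j) = 0) ∧
      ∀ j y, (fun m => ∑ i, θ.1 i j * a (i, m)) ⬝ᵥ fderiv ℂ (veroneseVec d) (θ.2 j) y = 0 := by
  classical
  simp only [dotProduct, fderiv_secantFrame, Fintype.sum_prod_type] at ha ⊢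
  constructor
  · intro i j
    have := ha (Pi.single i (Pi.single j 1), 0)
    simpa [Pi.single_apply, ite_apply] using this
  · intro j y
    have hinner (i : Fin (k + 1)) (m : Mon d) : ∑ l, θ.1 i l *
        fderiv ℂ (veroneseVec d) (θ.2 l) ((Pi.single j y : Fin (h + 1) → Fin 3 → ℂ) l) m =
        θ.1 i j * fderiv ℂ (veroneseVec d) (θ.2 j) y m := by
      refine (Fintype.sum_eq_single j fun l hl => ?_).trans (by rw [Pi.single_eq_same])
      rw [Pi.single_eq_of_ne hl, map_zero, Pi.zero_apply, mul_zero]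
    have := ha (0, Pi.single j y)
    simp only [Pi.zero_apply, zero_mul, add_zero, hinner] at this
    rw [← this, Finset.sum_comm]
    simp only [Finset.sum_mul, mul_assoc, mul_left_comm]

theorem ncard_compl_le_grdim_grassSecant_veronese (hd : d ≠ 0) {I : Fin (k + 1) ↪ Mon d}
    {T : Set (Gr.ChartIndex I)} {θ : SecantParam k h}
    (hθ : LinearIndependent ℂ fun j => veroneseVec d (θ.2 j))
    (hI : (Gr.frameMatrix (secantFrame d θ)).submatrix id I = 1)
    (hT : ∀ a : Fin (k + 1) × Mon d → ℂ, (∀ t ∈ T, a (t.1, t.2) = 0) →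
      (∀ i j, (fun m => a (i, m)) ⬝ᵥ veroneseVec d (θ.2 j) = 0) →
      (∀ j y, (fun m => ∑ i, θ.1 i j * a (i, m)) ⬝ᵥ fderiv ℂ (veroneseVec d) (θ.2 j) y = 0) →
      a = 0) :
    (Tᶜ.ncard : WithBot ℕ∞) ≤ grdim (grassSecant (Mon d) k h (veroneseVariety d)) := by
  refine Gr.ncard_compl_le_grdim_closure
    (contDiff_secantFrame.contDiffAt.hasStrictFDerivAt one_ne_zero) hI ?_
    (exists_eqOn_of_forall_dotProduct_eq_zero fun a haT ha => ?_)
  · filter_upwards [continuous_snd.continuousAt.eventually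
      (eventually_linearIndependent_veroneseVec hθ)] with θ hθ g hg
    exact stiefelToGr_mem_secantPlanes hd hθ hg
  · obtain ⟨hpoint, htangent⟩ := forall_dotProduct_fderiv_secantFrame_eq_zero ha
    exact hT a (fun t ht => haT _ fun hn => hn ⟨t, ht, rfl⟩) hpoint htangent

end Terracini

section CubicSurface

/-- The cubic monomial `x_i x_j x_l`. -/
def cubicMon (i j l : Fin 3) : Mon 3 :=
  ⟨Pi.single i 1 + Pi.single j 1 + Pi.single l 1, by simp [Finset.sum_add_distrib]⟩

theorem veroneseVec_cubicMon (x : Fin 3 → ℂ) (i j l : Fin 3) :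
    veroneseVec 3 x (cubicMon i j l) = x i * x j * x l := by
  simp only [veroneseVec, cubicMon, Pi.add_apply, pow_add, Finset.prod_mul_distrib,
    Pi.single_apply, pow_ite, pow_one, pow_zero]
  simp

theorem fderiv_veroneseVec_cubicMon (x v : Fin 3 → ℂ) (i j l : Fin 3) :
    fderiv ℂ (veroneseVec 3) x v (cubicMon i j l) =
      v i * x j * x l + x i * v j * x l + x i * x j * v l := by
  have hcoord := hasFDerivAt_pi'.mp
    (contDiff_veroneseVec.differentiable one_ne_zero x).hasFDerivAt (cubicMon i j l)
  simp only [veroneseVec_cubicMon] at hcoord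
  have hproj (n : Fin 3) := hasFDerivAt_apply (𝕜 := ℂ) n x
  have := congrArg (· v) (hcoord.unique (((hproj i).fun_mul (hproj j)).fun_mul (hproj l)))
  simp only [ContinuousLinearMap.comp_apply, ContinuousLinearMap.proj_apply, add_apply,
    smul_apply, smul_eq_mul] at this
  rw [this]
  ring

theorem univ_mon_three : (Finset.univ : Finset (Mon 3)) =
    {cubicMon 0 0 0, cubicMon 1 1 1, cubicMon 2 2 2, cubicMon 0 1 2, cubicMon 0 0 1,
      cubicMon 0 0 2, cubicMon 0 1 1, cubicMon 1 1 2, cubicMon 0 2 2, cubicMon 1 2 2} := by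
  decide

theorem sum_mon_three (f : Mon 3 → ℂ) : ∑ m, f m =
    f (cubicMon 0 0 0) + (f (cubicMon 1 1 1) + (f (cubicMon 2 2 2) + (f (cubicMon 0 1 2) +
      (f (cubicMon 0 0 1) + (f (cubicMon 0 0 2) + (f (cubicMon 0 1 1) + (f (cubicMon 1 1 2) +
        (f (cubicMon 0 2 2) + f (cubicMon 1 2 2))))))))) := by
  rw [univ_mon_three]
  repeat rw [Finset.sum_insert (by decide)]
  rw [Finset.sum_singleton]

theorem forall_mon_three {p : Mon 3 → Prop} : (∀ m, p m) ↔
    p (cubicMon 0 0 0) ∧ p (cubicMon 1 1 1) ∧ p (cubicMon 2 2 2) ∧ p (cubicMon 0 1 2) ∧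
      p (cubicMon 0 0 1) ∧ p (cubicMon 0 0 2) ∧ p (cubicMon 0 1 1) ∧ p (cubicMon 1 1 2) ∧
        p (cubicMon 0 2 2) ∧ p (cubicMon 1 2 2) := by
  have huniv : (∀ m, p m) ↔ ∀ m ∈ (Finset.univ : Finset (Mon 3)), p m := by
    simp only [Finset.mem_univ, forall_const]
  rw [huniv, univ_mon_three]
  simp only [Finset.forall_mem_insert, Finset.mem_singleton, forall_eq]

theorem dotProduct_veroneseVec_three (F : Mon 3 → ℂ) (x y z : ℂ) :
    F ⬝ᵥ veroneseVec 3 ![x, y, z] =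
      F (cubicMon 0 0 0) * x ^ 3 + F (cubicMon 1 1 1) * y ^ 3 + F (cubicMon 2 2 2) * z ^ 3 +
      F (cubicMon 0 1 2) * x * y * z + F (cubicMon 0 0 1) * x ^ 2 * y +
      F (cubicMon 0 0 2) * x ^ 2 * z + F (cubicMon 0 1 1) * x * y ^ 2 +
      F (cubicMon 1 1 2) * y ^ 2 * z + F (cubicMon 0 2 2) * x * z ^ 2 +
      F (cubicMon 1 2 2) * y * z ^ 2 := by
  simp only [dotProduct, sum_mon_three, veroneseVec_cubicMon, Matrix.cons_val]
  ring

theorem partials_eq_zero_of_singular {F : Mon 3 → ℂ} {x y z : ℂ}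
    (hF : ∀ v, F ⬝ᵥ fderiv ℂ (veroneseVec 3) ![x, y, z] v = 0) :
    3 * F (cubicMon 0 0 0) * x ^ 2 + F (cubicMon 0 1 2) * y * z +
        2 * F (cubicMon 0 0 1) * x * y + 2 * F (cubicMon 0 0 2) * x * z +
        F (cubicMon 0 1 1) * y ^ 2 + F (cubicMon 0 2 2) * z ^ 2 = 0 ∧
      3 * F (cubicMon 1 1 1) * y ^ 2 + F (cubicMon 0 1 2) * x * z +
        F (cubicMon 0 0 1) * x ^ 2 + 2 * F (cubicMon 0 1 1) * x * y +
        2 * F (cubicMon 1 1 2) * y * z + F (cubicMon 1 2 2) * z ^ 2 = 0 ∧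
      3 * F (cubicMon 2 2 2) * z ^ 2 + F (cubicMon 0 1 2) * x * y +
        F (cubicMon 0 0 2) * x ^ 2 + F (cubicMon 1 1 2) * y ^ 2 +
        2 * F (cubicMon 0 2 2) * x * z + 2 * F (cubicMon 1 2 2) * y * z = 0 := by
  simp only [dotProduct, sum_mon_three, fderiv_veroneseVec_cubicMon] at hF
  have hx := hF ![1, 0, 0]
  have hy := hF ![0, 1, 0]
  have hz := hF ![0, 0, 1]
  simp only [Matrix.cons_val] at hx hy hz
  exact ⟨by linear_combination hx, by linear_combination hy, by linear_combination hz⟩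

/-- The pencil spanned by `(1, 1, 1)³ + (-1, 1, 0)³` and the sum of the cubes of the coordinate
points, in the `5`-secant space of these five points. -/
def basePencil : SecantParam 1 4 :=
  (![![0, 0, 0, 1, 1], ![1, 1, 1, 0, 0]],
    ![![1, 0, 0], ![0, 1, 0], ![0, 0, 1], ![1, 1, 1], ![-1, 1, 0]])

theorem linearIndependent_veroneseVec_basePencil :
    LinearIndependent ℂ fun j => veroneseVec 3 (basePencil.2 j) := by
  refine Fintype.linearIndependent_iff.mpr fun g hg => ?_
  have hcoef (i j l : Fin 3) :
      ∑ n, g n * (basePencil.2 n i * basePencil.2 n j * basePencil.2 n l) = 0 := by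
    simpa [veroneseVec_cubicMon] using congrFun hg (cubicMon i j l)
  have h000 : g 0 + g 3 - g 4 = 0 := by
    simpa [basePencil, Fin.sum_univ_succ, sub_eq_add_neg, add_assoc] using hcoef 0 0 0
  have h111 : g 1 + g 3 + g 4 = 0 := by
    simpa [basePencil, Fin.sum_univ_succ, add_assoc] using hcoef 1 1 1
  have h222 : g 2 + g 3 = 0 := by simpa [basePencil, Fin.sum_univ_succ] using hcoef 2 2 2
  have h012 : g 3 = 0 := by simpa [basePencil, Fin.sum_univ_succ] using hcoef 0 1 2
  have h001 : g 3 + g 4 = 0 := by simpa [basePencil, Fin.sum_univ_succ] using hcoef 0 0 1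
  intro j
  fin_cases j <;> grind

/-- The columns `xyz` and `x³`, on which the base pencil restricts to the identity matrix. -/
def baseColumns : Fin 2 ↪ Mon 3 := ⟨![cubicMon 0 1 2, cubicMon 0 0 0], by decide⟩

theorem secantFrame_basePencil_submatrix_baseColumns :
    (Gr.frameMatrix (secantFrame 3 basePencil)).submatrix id baseColumns = 1 := by
  ext a b
  fin_cases a <;> fin_cases b <;>
    simp [Gr.frameMatrix, secantFrame, baseColumns, basePencil, veroneseVec_cubicMon,
      Fin.sum_univ_succ]

-- The only cubics singular at the three coordinate points are the multiples of `xyz`.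
theorem eq_zero_of_singular_coordinate_points {G : Mon 3 → ℂ}
    (h0 : ∀ y, G ⬝ᵥ fderiv ℂ (veroneseVec 3) ![1, 0, 0] y = 0)
    (h1 : ∀ y, G ⬝ᵥ fderiv ℂ (veroneseVec 3) ![0, 1, 0] y = 0)
    (h2 : ∀ y, G ⬝ᵥ fderiv ℂ (veroneseVec 3) ![0, 0, 1] y = 0)
    (h3 : G ⬝ᵥ veroneseVec 3 ![1, 1, 1] = 0) : G = 0 := by
  have h0 := partials_eq_zero_of_singular h0
  have h1 := partials_eq_zero_of_singular h1
  have h2 := partials_eq_zero_of_singular h2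
  rw [dotProduct_veroneseVec_three] at h3
  refine funext (forall_mon_three.mpr ?_)
  simp only [Pi.zero_apply]
  grind

-- By Bézout the line through the two double points and then the line `z = 0` are components, so
-- the vanishing conditions leave only the multiples of `(x + y - 2 * z) * z * (x - y)`.
theorem eq_zero_of_base_points_of_singular {F : Mon 3 → ℂ}
    (h0 : F ⬝ᵥ veroneseVec 3 ![1, 0, 0] = 0) (h1 : F ⬝ᵥ veroneseVec 3 ![0, 1, 0] = 0)
    (h2 : F ⬝ᵥ veroneseVec 3 ![0, 0, 1] = 0)
    (h3 : ∀ y, F ⬝ᵥ fderiv ℂ (veroneseVec 3) ![1, 1, 1] y = 0)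
    (h4 : ∀ y, F ⬝ᵥ fderiv ℂ (veroneseVec 3) ![-1, 1, 0] y = 0)
    (hF : F (cubicMon 0 0 2) = 0) : F = 0 := by
  have h3 := partials_eq_zero_of_singular h3
  have h4 := partials_eq_zero_of_singular h4
  rw [dotProduct_veroneseVec_three] at h0 h1 h2
  refine funext (forall_mon_three.mpr ?_)
  simp only [Pi.zero_apply]
  grind

theorem le_grdim_grassSecant_veronese :
    (15 : ℕ) ≤ grdim (grassSecant (Mon 3) 1 4 (veroneseVariety 3)) := by
  have hmem : cubicMon 0 0 2 ∉ Set.range baseColumns := by decide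
  let t₀ : Gr.ChartIndex baseColumns := (0, ⟨cubicMon 0 0 2, hmem⟩)
  have hcard : ({t₀}ᶜ : Set (Gr.ChartIndex baseColumns)).ncard = 15 := by
    rw [Set.ncard_compl, Set.ncard_singleton, Gr.card_chartIndex, Nat.card_eq_fintype_card]
    decide
  rw [← hcard]
  refine ncard_compl_le_grdim_grassSecant_veronese three_ne_zero
    linearIndependent_veroneseVec_basePencil secantFrame_basePencil_submatrix_baseColumns
    fun a ha hpoint htangent => ?_
  have hG : (fun m => a (1, m)) = 0 := eq_zero_of_singular_coordinate_points
    (by simpa [basePencil] using htangent 0) (by simpa [basePencil] using htangent 1)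
    (by simpa [basePencil] using htangent 2) (hpoint 1 3)
  have hF : (fun m => a (0, m)) = 0 := eq_zero_of_base_points_of_singular
    (hpoint 0 0) (hpoint 0 1) (hpoint 0 2)
    (by simpa [basePencil] using htangent 3) (by simpa [basePencil] using htangent 4)
    (ha t₀ rfl)
  ext ⟨i, m⟩
  fin_cases i
  exacts [congrFun hF m, congrFun hG m]

end CubicSurface

/-- London: the cubic Veronese surface V_{2,3} ⊆ ℙ⁹ is (1,4)-defective
with defect 1: the variety of lines lying in the span of 5 points of V_{2,3} has
dimension one less than the expected dimension min{5·2 + 2·3, 2·8} = 16. -/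
theorem stmt16 :
    grdim (grassSecant (Mon 3) 1 4 (veroneseVariety 3)) + (1 : ℕ∞) = ((16 : ℕ) : ℕ∞) := by
  rw [le_antisymm grdim_grassSecant_veronese_le le_grdim_grassSecant_veronese]
  rfl
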